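/- Let A be an algebra with a unary operation ¬. Then A belongs to Alg(S_N), i.e., the Tarski congruence of the g-matrix ⟨A, Fi_{S_N}(A)⟩ is the identity relation, if and only if A satisfies both: (i) ¬¬a = a for all a ∈ A, and (ii) for all a, b ∈ A, if a = ¬a and b = ¬b then a = b. -/

import Mathlib

/-- Formulas of the algebraic language with a single unary connective ¬,
built as the absolutely free algebra over a countably infinite set of variables. -/
inductive Fm : Type where
  | var : ℕ → Fm
  | neg : Fm → Fm

/-- The {¬}-fragment ⊢_N of classical propositional logic: Γ ⊢_N α iff every
homomorphism h from Fm to the two-element algebra 2_¬ = ⟨{0,1},¬⟩ (¬0 = 1, ¬1 = 0)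
with h[Γ] ⊆ {1} satisfies h(α) = 1. -/
def DerivN (Γ : Set Fm) (α : Fm) : Prop :=
  ∀ h : Fm → Bool, (∀ φ : Fm, h (Fm.neg φ) = !(h φ)) →
    (∀ γ ∈ Γ, h γ = true) → h α = true

/-- F ⊆ A is an S_N-filter of the algebra ⟨A, neg⟩ if for all Γ ∪ {α} ⊆ Fm with
Γ ⊢_N α and every homomorphism h : Fm → A, h[Γ] ⊆ F implies h(α) ∈ F. -/
def IsSNFilter {A : Type*} (neg : A → A) (F : Set A) : Prop :=
  ∀ (Γ : Set Fm) (α : Fm), DerivN Γ α →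
    ∀ h : Fm → A, (∀ φ : Fm, h (Fm.neg φ) = neg (h φ)) →
      (∀ γ ∈ Γ, h γ ∈ F) → h α ∈ F

/-- `Fig neg B` is the least S_N-filter of ⟨A, neg⟩ containing B
(the intersection of all S_N-filters containing B). -/
def Fig {A : Type*} (neg : A → A) (B : Set A) : Set A :=
  {a | ∀ F : Set A, IsSNFilter neg F → B ⊆ F → a ∈ F}

/-!
The `S_N`-filters are exactly the sets closed under `a ⊣⊢ ¬¬a` and `a, ¬a ⊢ b`: a set of formulas
closed under these rules and omitting `α` decides some formulas consistently, and any valuation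
refuting `α` can be used to decide the others. Hence `¬¬a` and `a` are always Tarski congruent, and
so are any two fixed points of `¬`, since each of them generates the whole algebra. Conversely, if
`¬` is an involution, then `{a}` is a filter for every `a` with `¬a ≠ a`, so filters separate such
an `a` from every other element.
-/

section NegClosed

variable {A B : Type*} {neg : A → A} {neg' : B → B}

/-- The subsets of an algebra closed under the rules `a ⊣⊢ ¬¬a` and `a, ¬a ⊢ b`. They turn out to be
the `S_N`-filters, see `isSNFilter_iff_isNegClosed`. -/
structure IsNegClosed (neg : A → A) (F : Set A) : Prop where
  neg_neg_mem_iff : ∀ a, neg (neg a) ∈ F ↔ a ∈ F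
  eq_univ_of_mem_of_neg_mem : ∀ {a}, a ∈ F → neg a ∈ F → F = Set.univ

theorem IsNegClosed.preimage {F : Set B} (hF : IsNegClosed neg' F) {h : A → B}
    (hh : Function.Semiconj h neg neg') : IsNegClosed neg (h ⁻¹' F) where
  neg_neg_mem_iff a := by
    simpa only [Set.mem_preimage, hh.eq] using hF.neg_neg_mem_iff (h a)
  eq_univ_of_mem_of_neg_mem {a} ha hna := by
    have hna' : neg' (h a) ∈ F := hh a ▸ hna
    rw [hF.eq_univ_of_mem_of_neg_mem ha hna', Set.preimage_univ]

theorem isNegClosed_singleton (hinv : Function.Involutive neg) {a : A} (ha : neg a ≠ a) :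
    IsNegClosed neg {a} where
  neg_neg_mem_iff b := by rw [hinv b]
  eq_univ_of_mem_of_neg_mem {b} hb hnb := by
    obtain rfl : b = a := hb
    exact absurd hnb ha

end NegClosed

/-- The homomorphism from the formula algebra to `⟨A, neg⟩` extending an assignment of the
variables. -/
def Fm.lift {A : Type*} (neg : A → A) (v : ℕ → A) : Fm → A
  | .var n => v n
  | .neg φ => neg (Fm.lift neg v φ)

theorem Fm.semiconj_lift {A : Type*} (neg : A → A) (v : ℕ → A) :
    Function.Semiconj (Fm.lift neg v) Fm.neg neg :=
  fun _ => rfl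

theorem Fm.exists_valuation_eq_false (α : Fm) :
    ∃ d : Fm → Bool, Function.Semiconj d Fm.neg not ∧ d α = false := by
  let d := Fm.lift not fun _ => true
  have hd : Function.Semiconj d Fm.neg not := Fm.semiconj_lift not _
  -- The complement of a valuation is again a valuation.
  cases hα : d α with
  | false => exact ⟨d, hd, hα⟩
  | true => exact ⟨fun φ => !d φ, fun φ => congrArg not (hd φ), congrArg not hα⟩

theorem IsNegClosed.exists_valuation_eq_false {T : Set Fm} (hT : IsNegClosed Fm.neg T) {α : Fm}
    (hα : α ∉ T) :
    ∃ g : Fm → Bool, Function.Semiconj g Fm.neg not ∧ (∀ φ ∈ T, g φ = true) ∧ g α = false := by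
  classical
  obtain ⟨d, hd, hdα⟩ := α.exists_valuation_eq_false
  have hcons {φ : Fm} (hφ : φ ∈ T) : φ.neg ∉ T := fun hnφ =>
    hα (hT.eq_univ_of_mem_of_neg_mem hφ hnφ ▸ Set.mem_univ α)
  -- `T` decides as many formulas as it can; the remaining ones are left to `d`.
  let g (φ : Fm) : Bool := if φ ∈ T then true else if φ.neg ∈ T then false else d φ
  refine ⟨g, fun φ => ?_, fun φ hφ => if_pos hφ, ?_⟩
  · by_cases hφ : φ ∈ T
    · simp [g, hφ, hcons hφ, hT.neg_neg_mem_iff]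
    · by_cases hnφ : φ.neg ∈ T <;> simp [g, hφ, hnφ, hT.neg_neg_mem_iff, hd.eq]
  · simp [g, hα, hdα]

namespace DerivN

theorem mono {Γ Δ : Set Fm} {α : Fm} (hΓ : DerivN Γ α) (hΓΔ : Γ ⊆ Δ) : DerivN Δ α :=
  fun g hg hΔ => hΓ g hg fun γ hγ => hΔ γ (hΓΔ hγ)

theorem neg_neg_intro (φ : Fm) : DerivN {φ} φ.neg.neg := by
  intro g hg hφ
  rw [hg, hg, Bool.not_not, hφ φ rfl]

theorem neg_neg_elim (φ : Fm) : DerivN {φ.neg.neg} φ := by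
  intro g hg hφ
  simpa only [hg, Bool.not_not] using hφ _ rfl

theorem explosion (φ ψ : Fm) : DerivN {φ, φ.neg} ψ := by
  intro g hg hφ
  have hpos : g φ = true := hφ φ (.inl rfl)
  have hneg : g φ.neg = true := hφ φ.neg (.inr rfl)
  rw [hg, hpos] at hneg
  contradiction

theorem mem_of_isNegClosed {T : Set Fm} {α : Fm} (hα : DerivN T α) (hT : IsNegClosed Fm.neg T) :
    α ∈ T := by
  by_contra hαT
  obtain ⟨g, hg, hgT, hgα⟩ := hT.exists_valuation_eq_false hαT
  exact Bool.false_ne_true (hgα.symm.trans (hα g hg hgT))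

end DerivN

section Filters

variable {A : Type*} {neg : A → A} {F : Set A} {a b : A}

theorem IsSNFilter.isNegClosed (hF : IsSNFilter neg F) : IsNegClosed neg F where
  neg_neg_mem_iff a := by
    have hlift := Fm.semiconj_lift neg fun _ => a
    constructor <;> intro ha
    · exact hF _ _ (.neg_neg_elim (.var 0)) _ hlift (by rintro _ rfl; exact ha)
    · exact hF _ _ (.neg_neg_intro (.var 0)) _ hlift (by rintro _ rfl; exact ha)
  eq_univ_of_mem_of_neg_mem {a} ha hna := by
    refine Set.eq_univ_of_forall fun b => ?_
    have hlift := Fm.semiconj_lift neg fun n => if n = 0 then a else b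
    exact hF _ _ (.explosion (.var 0) (.var 1)) _ hlift
      (by rintro _ (rfl | rfl); exacts [ha, hna])

theorem isSNFilter_iff_isNegClosed : IsSNFilter neg F ↔ IsNegClosed neg F :=
  ⟨IsSNFilter.isNegClosed, fun hF _ _ hα _ hh hΓ =>
    (hα.mono hΓ).mem_of_isNegClosed (hF.preimage hh)⟩

theorem fig_subset_iff (hF : IsSNFilter neg F) {X : Set A} : Fig neg X ⊆ F ↔ X ⊆ F :=
  ⟨fun h _ hx => h fun _ _ hX => hX hx, fun hX _ ha => ha F hF hX⟩

theorem fig_singleton_eq_iff :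
    Fig neg {a} = Fig neg {b} ↔ ∀ F, IsSNFilter neg F → (a ∈ F ↔ b ∈ F) := by
  constructor
  · intro hab F hF
    rw [← Set.singleton_subset_iff, ← fig_subset_iff hF, hab, fig_subset_iff hF,
      Set.singleton_subset_iff]
  · intro hab
    ext x
    simp only [Fig, Set.singleton_subset_iff]
    exact forall₂_congr fun F hF => by rw [hab F hF]

theorem fig_singleton_neg_neg (neg : A → A) (a : A) : Fig neg {neg (neg a)} = Fig neg {a} :=
  fig_singleton_eq_iff.2 fun _ hF => hF.isNegClosed.neg_neg_mem_iff a

theorem fig_singleton_eq_univ (ha : neg a = a) : Fig neg {a} = Set.univ := by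
  refine Set.eq_univ_of_forall fun b F hF hsub => ?_
  have haF : a ∈ F := hsub rfl
  exact hF.isNegClosed.eq_univ_of_mem_of_neg_mem haF (ha.symm ▸ haF) ▸ Set.mem_univ b

theorem eq_of_fig_singleton_eq (hinv : Function.Involutive neg) (ha : neg a ≠ a)
    (hab : Fig neg {a} = Fig neg {b}) : a = b :=
  have hfilter : IsSNFilter neg {a} :=
    isSNFilter_iff_isNegClosed.2 (isNegClosed_singleton hinv ha)
  ((fig_singleton_eq_iff.1 hab {a} hfilter).1 rfl).symm

end Filters

section TarskiCongruence

variable {A : Type*} (neg : A → A)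

/-- The Tarski congruence of `⟨A, Fi_{S_N}(A)⟩`. No iterates of `neg` beyond the first have to be
compared, because `¬¬a` and `a` generate the same filter. -/
def tarskiCongruence : Setoid A where
  r a b := Fig neg {a} = Fig neg {b} ∧ Fig neg {neg a} = Fig neg {neg b}
  iseqv :=
    { refl := fun _ => ⟨rfl, rfl⟩
      symm := fun h => ⟨h.1.symm, h.2.symm⟩
      trans := fun h h' => ⟨h.1.trans h'.1, h.2.trans h'.2⟩ }

variable {neg}

theorem tarskiCongruence_neg {a b : A} (h : tarskiCongruence neg a b) :
    tarskiCongruence neg (neg a) (neg b) :=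
  ⟨h.2, by rw [fig_singleton_neg_neg, fig_singleton_neg_neg, h.1]⟩

theorem tarskiCongruence_of_rel {θ : A → A → Prop} (hneg : ∀ a b, θ a b → θ (neg a) (neg b))
    (hfig : ∀ a b, θ a b → Fig neg {a} = Fig neg {b}) {a b : A} (hab : θ a b) :
    tarskiCongruence neg a b :=
  ⟨hfig a b hab, hfig _ _ (hneg a b hab)⟩

theorem tarskiCongruence_eq_bot_iff :
    tarskiCongruence neg = ⊥ ↔
      ∀ θ : A → A → Prop, Equivalence θ → (∀ a b, θ a b → θ (neg a) (neg b)) →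
        (∀ a b, θ a b → Fig neg {a} = Fig neg {b}) → ∀ a b, θ a b → a = b := by
  rw [eq_bot_iff]
  constructor
  · intro h θ _ hneg hfig a b hab
    exact h (tarskiCongruence_of_rel hneg hfig hab)
  · intro h a b hab
    exact h (tarskiCongruence neg) (tarskiCongruence neg).iseqv
      (fun _ _ => tarskiCongruence_neg) (fun _ _ hxy => hxy.1) a b hab

theorem tarskiCongruence_neg_neg (a : A) : tarskiCongruence neg (neg (neg a)) a :=
  ⟨fig_singleton_neg_neg neg a, fig_singleton_neg_neg neg (neg a)⟩

theorem tarskiCongruence_of_fixed {a b : A} (ha : neg a = a) (hb : neg b = b) :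
    tarskiCongruence neg a b := by
  have hab : Fig neg {a} = Fig neg {b} := by
    rw [fig_singleton_eq_univ ha, fig_singleton_eq_univ hb]
  exact ⟨hab, by rwa [ha, hb]⟩

end TarskiCongruence

/-- A ∈ Alg(S_N): the Tarski congruence of ⟨A, Fi_{S_N}(A)⟩ — the largest
congruence θ with θ a b → Fig({a}) = Fig({b}) — is the identity (i.e. every
such congruence is contained in the identity) iff (i) ¬¬a = a for all a, and
(ii) a = ¬a and b = ¬b imply a = b. -/
theorem stmt19 {A : Type*} (neg : A → A) :
    (∀ θ : A → A → Prop, Equivalence θ → (∀ a b : A, θ a b → θ (neg a) (neg b)) →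
      (∀ a b : A, θ a b → Fig neg {a} = Fig neg {b}) →
      ∀ a b : A, θ a b → a = b) ↔
    ((∀ a : A, neg (neg a) = a) ∧
     (∀ a b : A, neg a = a → neg b = b → a = b)) := by
  rw [← tarskiCongruence_eq_bot_iff, eq_bot_iff]
  constructor
  · intro h
    exact ⟨fun a => h (tarskiCongruence_neg_neg a),
      fun a b ha hb => h (tarskiCongruence_of_fixed ha hb)⟩
  · rintro ⟨hinv, hfix⟩ a b ⟨hab, -⟩
    by_cases ha : neg a = a
    · by_cases hb : neg b = b
      · exact hfix a b ha hb
      · exact (eq_of_fig_singleton_eq hinv hb hab.symm).symm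
    · exact eq_of_fig_singleton_eq hinv ha hab
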